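/- arXiv:2303.15088 — 2 statements merged into one kernel-verified Lean document; each statement's English description precedes it below -/
import Mathlib

section
/- Let f : V × V → W be an object of SSKE of dimension (m | n) (dim V₀ = m, dim V₁ = n) and rank (C(m,2) + C(n+1,2) | mn), i.e., dim W₀ = m(m−1)/2 + n(n+1)/2 and dim W₁ = mn. Then the associated Lie superalgebra L_f is a generalized Heisenberg Lie superalgebra, i.e., Z(L_f) = L_f² = 0 ⊕ W, of dimension (C(m+1,2) + C(n+1,2) | mn + n), i.e., dim (L_f)₀ = m(m+1)/2 + n(n+1)/2 and dim (L_f)₁ = mn + n, and its derived subalgebra has dimension (C(m,2) + C(n+1,2) | mn). -/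
/-!
Write `p` and `q` for the dimensions of graded pieces `P ⊆ V₀` and `Q ⊆ V₁`. Since `f` is
alternating on `V₀` and symmetric on `V₁`, the values of `f` on `P ⊕ Q` span a space of dimension
at most `C(p, 2) + C(q + 1, 2) + p q`. The kernel of `f` is graded, and a nonzero homogeneous
element of it can be split off from `V` without changing the span `W` of the values of `f`; the
bound for the remaining space of dimension `(m - 1 | n)` or `(m | n - 1)` is then smaller than the
assumed dimension of `W`. Hence `f` is nondegenerate, which is exactly `Z(L_f) = 0 ⊕ W = L_f²`.
-/

open TensorProduct

noncomputable section

/-- The sign `(−1)^{σ·τ}` (for degrees `σ τ : ℤ/2`) as an element of the field `F`. -/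
def ssign (F : Type*) [Field F] (σ τ : ZMod 2) : F := (-1 : F) ^ (σ * τ).val

variable {F V W L : Type*}

section Defs

variable [Field F] [AddCommGroup V] [Module F V] [AddCommGroup W] [Module F W]
  [AddCommGroup L] [Module F L]

/-- `f : V × V → W` is an object of the category `SSKE`: a grading-preserving
skew-supersymmetric bilinear map between superspaces whose image spans `W`. -/
structure IsSSKE (gV : ZMod 2 → Submodule F V) (gW : ZMod 2 → Submodule F W)
    (f : V →ₗ[F] V →ₗ[F] W) : Prop where
  internalV : DirectSum.IsInternal gV
  internalW : DirectSum.IsInternal gW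
  grading : ∀ σ τ : ZMod 2, ∀ u ∈ gV σ, ∀ v ∈ gV τ, f u v ∈ gW (σ + τ)
  skew : ∀ σ τ : ZMod 2, ∀ u ∈ gV σ, ∀ v ∈ gV τ, f u v = -(ssign F σ τ) • f v u
  span_eq_top : Submodule.span F {w : W | ∃ u v : V, f u v = w} = ⊤

/-- A subspace `U` of a superspace is graded: `U = (U ∩ V₀) ⊕ (U ∩ V₁)`. -/
def IsGradedSub (gV : ZMod 2 → Submodule F V) (U : Submodule F V) : Prop :=
  U = U ⊓ gV 0 ⊔ U ⊓ gV 1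

/-- The subspace `X_g` of `V ⊗ W` (for the restriction of `g` to a subspace `U` of `V`),
spanned by all `(−1)^{|a||c|} a ⊗ g(b,c) + (−1)^{|b||a|} b ⊗ g(c,a) + (−1)^{|c||b|} c ⊗ g(a,b)`
with `a, b, c` homogeneous elements of `U`. For `U = ⊤` this is `X_g` itself. -/
def XFr (gV : ZMod 2 → Submodule F V) (U : Submodule F V)
    (g : V →ₗ[F] V →ₗ[F] W) : Submodule F (V ⊗[F] W) :=
  Submodule.span F {z : V ⊗[F] W | ∃ σ τ ρ : ZMod 2, ∃ a ∈ U ⊓ gV σ, ∃ b ∈ U ⊓ gV τ,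
    ∃ c ∈ U ⊓ gV ρ,
    z = ssign F σ ρ • (a ⊗ₜ[F] g b c) + ssign F τ σ • (b ⊗ₜ[F] g c a)
      + ssign F ρ τ • (c ⊗ₜ[F] g a b)}

/-- The epicenter `Z*(g)` of (the restriction to a subspace `U` of) a
skew-supersymmetric bilinear map `g`: all `w = g(u,v)` with `u, v` homogeneous in `U`
such that `(−1)^{|x||v|} x ⊗ w ∈ X_g` for every homogeneous `x ∈ U`. -/
def Zstar (gV : ZMod 2 → Submodule F V) (U : Submodule F V)
    (g : V →ₗ[F] V →ₗ[F] W) : Set W :=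
  {w : W | ∃ σ τ : ZMod 2, ∃ u ∈ U ⊓ gV σ, ∃ v ∈ U ⊓ gV τ, w = g u v ∧
    ∀ ρ : ZMod 2, ∀ x ∈ U ⊓ gV ρ, ssign F ρ τ • (x ⊗ₜ[F] w) ∈ XFr gV U g}

/-- The subspace `U ⊗ T` of `V ⊗ W`. -/
def tensSpan (U : Submodule F V) (T : Submodule F W) : Submodule F (V ⊗[F] W) :=
  Submodule.span F {z : V ⊗[F] W | ∃ u ∈ U, ∃ t ∈ T, z = u ⊗ₜ[F] t}

/-- The bracket of the Lie superalgebra `L_f = V ⊕ W`: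
`[(v,w),(v′,w′)] = (0, f(v,v′))`. -/
def superBracket (f : V →ₗ[F] V →ₗ[F] W) :
    (V × W) →ₗ[F] (V × W) →ₗ[F] (V × W) :=
  ((f.compl₂ (LinearMap.fst F V W)).compr₂ (LinearMap.inr F V W)).comp
    (LinearMap.fst F V W)

/-- The derived subalgebra `L² `: the span of all brackets. -/
def derivedSub (B : L →ₗ[F] L →ₗ[F] L) : Submodule F L :=
  Submodule.span F {z : L | ∃ x y : L, z = B x y}

/-- The span of all brackets of elements of a subspace `P`. -/
def derivedOn (B : L →ₗ[F] L →ₗ[F] L) (P : Submodule F L) : Submodule F L :=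
  Submodule.span F {z : L | ∃ x ∈ P, ∃ y ∈ P, z = B x y}

/-- The axioms of a Lie superalgebra: `L` with grading `gL`, an internal direct sum,
and a bilinear bracket `B` which preserves the grading and satisfies graded
skew-symmetry and the graded Jacobi identity. -/
structure IsLieSuper (gL : ZMod 2 → Submodule F L) (B : L →ₗ[F] L →ₗ[F] L) : Prop where
  internal : DirectSum.IsInternal gL
  grading : ∀ σ τ : ZMod 2, ∀ x ∈ gL σ, ∀ y ∈ gL τ, B x y ∈ gL (σ + τ)
  skew : ∀ σ τ : ZMod 2, ∀ x ∈ gL σ, ∀ y ∈ gL τ, B x y = -(ssign F σ τ) • B y x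
  jacobi : ∀ σ τ ρ : ZMod 2, ∀ x ∈ gL σ, ∀ y ∈ gL τ, ∀ z ∈ gL ρ,
    ssign F σ ρ • B x (B y z) + ssign F τ σ • B y (B z x)
      + ssign F ρ τ • B z (B x y) = 0

end Defs

section Submodules

variable {R M N : Type*} [Ring R] [AddCommGroup M] [Module R M] [AddCommGroup N] [Module R N]

theorem isCompl_of_isInternal {g : ZMod 2 → Submodule R M} (h : DirectSum.IsInternal g) :
    IsCompl (g 0) (g 1) := by
  have huniv : (Set.univ : Set (ZMod 2)) = {0, 1} := by
    ext σ
    revert σ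
    decide
  exact (DirectSum.isInternal_submodule_iff_isCompl g zero_ne_one huniv).1 h

theorem linearMap_eq_zero_of_isInternal {ι : Type*} [DecidableEq ι] {g : ι → Submodule R M}
    (hg : DirectSum.IsInternal g) {φ : M →ₗ[R] N} (hφ : ∀ i, ∀ x ∈ g i, φ x = 0) : φ = 0 := by
  rw [← LinearMap.ker_eq_top, eq_top_iff, ← hg.submodule_iSup_eq_top]
  exact iSup_le hφ

theorem span_range_coe_basis {p : Submodule R M} {ι : Type*} (b : Module.Basis ι R p) :
    Submodule.span R (Set.range fun i => (b i : M)) = p := by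
  have h := congrArg (Submodule.map p.subtype) b.span_eq
  rwa [Submodule.map_span, ← Set.range_comp, Submodule.map_subtype_top] at h

variable [StrongRankCondition R]

theorem finrank_le_card_of_le_span_range {ι : Type*} [Fintype ι] {p : Submodule R M} {g : ι → M}
    (h : p ≤ Submodule.span R (Set.range g)) : Module.finrank R p ≤ Fintype.card ι := by
  have : Module.Finite R (Submodule.span R (Set.range g)) :=
    Module.Finite.span_of_finite R (Set.finite_range g)
  exact (Submodule.finrank_mono h).trans (finrank_range_le_card g)

theorem finrank_submodule_prod (p : Submodule R M) (q : Submodule R N) [Module.Free R p]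
    [Module.Finite R p] [Module.Free R q] [Module.Finite R q] :
    Module.finrank R (p.prod q) = Module.finrank R p + Module.finrank R q := by
  have hinj : Function.Injective (p.subtype.prodMap q.subtype) :=
    Prod.map_injective.2 ⟨p.subtype_injective, q.subtype_injective⟩
  have hdim := LinearMap.finrank_range_of_inj hinj
  rwa [LinearMap.range_prodMap, Submodule.range_subtype, Submodule.range_subtype,
    Module.finrank_prod] at hdim

theorem exists_sup_span_singleton_eq {K : Type*} [DivisionRing K] [AddCommGroup V] [Module K V]
    {p : Submodule K V} [FiniteDimensional K p] {z : V} (hzp : z ∈ p) (hz : z ≠ 0) :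
    ∃ q : Submodule K V, q ⊔ K ∙ z = p ∧ Module.finrank K q + 1 = Module.finrank K p := by
  obtain ⟨q, hdisj, hsup⟩ := IsModularLattice.exists_disjoint_and_sup_eq
    ((Submodule.span_singleton_le_iff_mem z p).2 hzp)
  rw [sup_comm] at hsup
  have : FiniteDimensional K q := Submodule.finiteDimensional_of_le (hsup ▸ le_sup_left)
  refine ⟨q, hsup, ?_⟩
  have hdim := Submodule.finrank_sup_add_finrank_inf_eq q (K ∙ z)
  rw [hsup, hdisj.symm.eq_bot, finrank_bot, add_zero, finrank_span_singleton hz] at hdim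
  exact hdim.symm

end Submodules

theorem sym2_out_eq_or {ι : Type*} (i j : ι) : s(i, j).out = (i, j) ∨ s(i, j).out = (j, i) :=
  Sym2.mk_eq_mk_iff.1 (Quot.out_eq s(i, j))

section BilinearSpan

variable {R M N P : Type*} [CommRing R] [AddCommGroup M] [Module R M] [AddCommGroup N] [Module R N]
  [AddCommGroup P] [Module R P]

theorem map₂_eq_span_range_basis {p : Submodule R M} {q : Submodule R N} {ι κ : Type*}
    (f : M →ₗ[R] N →ₗ[R] P) (b : Module.Basis ι R p) (c : Module.Basis κ R q) :
    Submodule.map₂ f p q = Submodule.span R (Set.range fun x : ι × κ => f (b x.1) (c x.2)) := by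
  conv_lhs => rw [← span_range_coe_basis b, ← span_range_coe_basis c, Submodule.map₂_span_span,
    Set.image2_range]

theorem map₂_sup_span_singleton_self {f : M →ₗ[R] M →ₗ[R] P} {z : M} (hz : f z = 0)
    (hz' : f.flip z = 0) (p : Submodule R M) :
    Submodule.map₂ f (p ⊔ R ∙ z) (p ⊔ R ∙ z) = Submodule.map₂ f p p := by
  simp only [Submodule.map₂_sup_left, Submodule.map₂_sup_right,
    Submodule.map₂_span_singleton_eq_map, Submodule.map₂_span_singleton_eq_map_flip, hz, hz',
    Submodule.map_zero, sup_bot_eq]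

variable [Nontrivial R]

theorem finrank_map₂_le_mul (f : M →ₗ[R] N →ₗ[R] P) (p : Submodule R M) (q : Submodule R N)
    [Module.Free R p] [Module.Finite R p] [Module.Free R q] [Module.Finite R q] :
    Module.finrank R (Submodule.map₂ f p q) ≤ Module.finrank R p * Module.finrank R q := by
  have hle := finrank_le_card_of_le_span_range
    (map₂_eq_span_range_basis f (Module.finBasis R p) (Module.finBasis R q)).le
  rwa [Fintype.card_prod, Fintype.card_fin, Fintype.card_fin] at hle

theorem finrank_map₂_self_le_of_symmetric {f : M →ₗ[R] M →ₗ[R] P} {p : Submodule R M}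
    [Module.Free R p] [Module.Finite R p] (hf : ∀ u ∈ p, ∀ v ∈ p, f u v = f v u) :
    Module.finrank R (Submodule.map₂ f p p) ≤ (Module.finrank R p + 1).choose 2 := by
  let b := Module.finBasis R p
  let g (s : Sym2 (Fin (Module.finrank R p))) : P := f (b s.out.1) (b s.out.2)
  have hle : Submodule.map₂ f p p ≤ Submodule.span R (Set.range g) := by
    rw [map₂_eq_span_range_basis f b b, Submodule.span_le]
    rintro _ ⟨⟨i, j⟩, rfl⟩
    have hg : g s(i, j) = f (b i) (b j) := by
      rcases sym2_out_eq_or i j with h | h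
      · simp only [g, h]
      · simp only [g, h, hf _ (b i).2 _ (b j).2]
    exact Submodule.subset_span ⟨s(i, j), hg⟩
  have hcard := finrank_le_card_of_le_span_range hle
  rwa [Sym2.card, Fintype.card_fin] at hcard

theorem finrank_map₂_self_le_of_isAlt {f : M →ₗ[R] M →ₗ[R] P} {p : Submodule R M}
    [Module.Free R p] [Module.Finite R p] (hf : (f.domRestrict₁₂ p p).IsAlt) :
    Module.finrank R (Submodule.map₂ f p p) ≤ (Module.finrank R p).choose 2 := by
  let b := Module.finBasis R p
  let g (s : {s : Sym2 (Fin (Module.finrank R p)) // ¬ s.IsDiag}) : P :=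
    f (b s.1.out.1) (b s.1.out.2)
  have hle : Submodule.map₂ f p p ≤ Submodule.span R (Set.range g) := by
    rw [map₂_eq_span_range_basis f b b, Submodule.span_le]
    rintro _ ⟨⟨i, j⟩, rfl⟩
    obtain rfl | hij := eq_or_ne i j
    · have h0 : f (b i) (b i) = 0 := hf (b i)
      simp only [h0, SetLike.mem_coe, zero_mem]
    · let s : {s : Sym2 (Fin (Module.finrank R p)) // ¬ s.IsDiag} :=
        ⟨s(i, j), Sym2.mk_isDiag_iff.not.2 hij⟩
      have hmem : g s ∈ Submodule.span R (Set.range g) := Submodule.subset_span ⟨s, rfl⟩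
      rcases sym2_out_eq_or i j with h | h
      · have hg : g s = f (b i) (b j) := by simp only [g, s, h]
        rwa [hg] at hmem
      · have hg : g s = -f (b i) (b j) := by
          simp only [g, s, h]
          exact (hf.neg (b i) (b j)).symm
        rwa [hg, neg_mem_iff] at hmem
  have hcard := finrank_le_card_of_le_span_range hle
  rwa [Sym2.card_subtype_not_diag, Fintype.card_fin] at hcard

end BilinearSpan

namespace IsSSKE

variable [Field F] [AddCommGroup V] [Module F V] [AddCommGroup W] [Module F W]
  {gV : ZMod 2 → Submodule F V} {gW : ZMod 2 → Submodule F W} {f : V →ₗ[F] V →ₗ[F] W}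

theorem map₂_top_top (hf : IsSSKE gV gW f) : Submodule.map₂ f ⊤ ⊤ = ⊤ := by
  rw [eq_top_iff, ← hf.span_eq_top, Submodule.span_le]
  rintro _ ⟨u, v, rfl⟩
  exact Submodule.apply_mem_map₂ f Submodule.mem_top Submodule.mem_top

theorem finiteDimensional [FiniteDimensional F V] (hf : IsSSKE gV gW f) :
    FiniteDimensional F W := by
  rw [FiniteDimensional, Module.finite_def, ← hf.map₂_top_top]
  exact Module.Finite.fg_top.map₂ f Module.Finite.fg_top

theorem apply_eq_neg_of_mem_even (hf : IsSSKE gV gW f) {τ : ZMod 2} {u v : V} (hu : u ∈ gV 0)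
    (hv : v ∈ gV τ) : f u v = -f v u := by
  simpa only [ssign, zero_mul, ZMod.val_zero, pow_zero, neg_smul, one_smul]
    using hf.skew 0 τ u hu v hv

theorem apply_comm_of_mem_odd (hf : IsSSKE gV gW f) {u v : V} (hu : u ∈ gV 1) (hv : v ∈ gV 1) :
    f u v = f v u := by
  have hsign : ssign F 1 1 = -1 := pow_one (-1)
  simpa only [hsign, neg_neg, one_smul] using hf.skew 1 1 u hu v hv

theorem apply_self_of_mem_even (hf : IsSSKE gV gW f) (hchar2 : (2 : F) ≠ 0) {u : V}
    (hu : u ∈ gV 0) : f u u = 0 := by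
  have h : (2 : F) • f u u = 0 := by
    rw [two_smul, ← eq_neg_iff_add_eq_zero]
    exact hf.apply_eq_neg_of_mem_even hu hu
  exact (smul_eq_zero.1 h).resolve_left hchar2

theorem flip_apply_eq_zero (hf : IsSSKE gV gW f) {σ : ZMod 2} {z : V} (hzσ : z ∈ gV σ)
    (hz : f z = 0) : f.flip z = 0 :=
  linearMap_eq_zero_of_isInternal hf.internalV fun τ x hx => by
    rw [LinearMap.flip_apply, hf.skew τ σ x hx z hzσ, hz, LinearMap.zero_apply, smul_zero]

theorem isGradedSub_ker (hf : IsSSKE gV gW f) : IsGradedSub gV (LinearMap.ker f) := by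
  refine le_antisymm (fun z hz => ?_) (sup_le inf_le_left inf_le_left)
  obtain ⟨a, ha, b, hb, rfl⟩ := Submodule.mem_sup.1
    ((isCompl_of_isInternal hf.internalV).sup_eq_top ▸ Submodule.mem_top (x := z))
  have hab : f a = -f b := by rwa [LinearMap.mem_ker, map_add, add_eq_zero_iff_eq_neg] at hz
  have hfa : f a = 0 := linearMap_eq_zero_of_isInternal hf.internalV fun τ x hx => by
    have hdisj : Disjoint (gW (0 + τ)) (gW (1 + τ)) :=
      hf.internalW.submodule_iSupIndep.pairwiseDisjoint (by simp)
    refine Submodule.disjoint_def.1 hdisj _ (hf.grading 0 τ a ha x hx) ?_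
    rw [hab, LinearMap.neg_apply]
    exact neg_mem (hf.grading 1 τ b hb x hx)
  have hfb : f b = 0 := by rwa [hfa, eq_comm, neg_eq_zero] at hab
  exact Submodule.add_mem_sup ⟨hfa, ha⟩ ⟨hfb, hb⟩

theorem map₂_sup_self_le (hf : IsSSKE gV gW f) {P Q : Submodule F V} (hP : P ≤ gV 0)
    (hQ : Q ≤ gV 1) : Submodule.map₂ f (P ⊔ Q) (P ⊔ Q) ≤
      Submodule.map₂ f P P ⊔ Submodule.map₂ f Q Q ⊔ Submodule.map₂ f P Q := by
  have hQP : Submodule.map₂ f Q P ≤ Submodule.map₂ f P Q := Submodule.map₂_le.2 fun v hv u hu => by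
    rw [← neg_mem_iff, ← hf.apply_eq_neg_of_mem_even (hP hu) (hQ hv)]
    exact Submodule.apply_mem_map₂ f hu hv
  rw [Submodule.map₂_sup_left, Submodule.map₂_sup_right, Submodule.map₂_sup_right]
  exact sup_le (sup_le (le_sup_of_le_left le_sup_left) le_sup_right)
    (sup_le (hQP.trans le_sup_right) (le_sup_of_le_left le_sup_right))

variable [FiniteDimensional F V]

theorem finrank_map₂_sup_self_le (hf : IsSSKE gV gW f) (hchar2 : (2 : F) ≠ 0)
    {P Q : Submodule F V} (hP : P ≤ gV 0) (hQ : Q ≤ gV 1) :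
    Module.finrank F (Submodule.map₂ f (P ⊔ Q) (P ⊔ Q)) ≤
      (Module.finrank F P).choose 2 + (Module.finrank F Q + 1).choose 2 +
        Module.finrank F P * Module.finrank F Q := by
  have := hf.finiteDimensional
  have heven : Module.finrank F (Submodule.map₂ f P P) ≤ (Module.finrank F P).choose 2 :=
    finrank_map₂_self_le_of_isAlt fun u => hf.apply_self_of_mem_even hchar2 (hP u.2)
  have hodd : Module.finrank F (Submodule.map₂ f Q Q) ≤ (Module.finrank F Q + 1).choose 2 :=
    finrank_map₂_self_le_of_symmetric fun u hu v hv => hf.apply_comm_of_mem_odd (hQ hu) (hQ hv)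
  calc Module.finrank F (Submodule.map₂ f (P ⊔ Q) (P ⊔ Q))
      ≤ Module.finrank F
          ↥(Submodule.map₂ f P P ⊔ Submodule.map₂ f Q Q ⊔ Submodule.map₂ f P Q) :=
        Submodule.finrank_mono (hf.map₂_sup_self_le hP hQ)
    _ ≤ Module.finrank F (Submodule.map₂ f P P) + Module.finrank F (Submodule.map₂ f Q Q) +
          Module.finrank F (Submodule.map₂ f P Q) :=
        (Submodule.finrank_add_le_finrank_add_finrank _ _).trans
          (Nat.add_le_add_right (Submodule.finrank_add_le_finrank_add_finrank _ _) _)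
    _ ≤ _ := Nat.add_le_add (Nat.add_le_add heven hodd) (finrank_map₂_le_mul f P Q)

theorem finrank_le_of_sup_eq_top (hf : IsSSKE gV gW f) (hchar2 : (2 : F) ≠ 0)
    {P Q : Submodule F V} (hP : P ≤ gV 0) (hQ : Q ≤ gV 1) {σ : ZMod 2} {z : V} (hzσ : z ∈ gV σ)
    (hz : f z = 0) (hsup : P ⊔ Q ⊔ F ∙ z = ⊤) :
    Module.finrank F W ≤ (Module.finrank F P).choose 2 + (Module.finrank F Q + 1).choose 2 +
      Module.finrank F P * Module.finrank F Q := by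
  rw [← finrank_top F W, ← hf.map₂_top_top, ← hsup,
    map₂_sup_span_singleton_self hz (hf.flip_apply_eq_zero hzσ hz)]
  exact hf.finrank_map₂_sup_self_le hchar2 hP hQ

theorem ker_inf_even_eq_bot [Nontrivial W] (hf : IsSSKE gV gW f) (hchar2 : (2 : F) ≠ 0) {m n : ℕ}
    (hV0 : Module.finrank F (gV 0) = m) (hV1 : Module.finrank F (gV 1) = n)
    (hW : Module.finrank F W = m.choose 2 + (n + 1).choose 2 + m * n) :
    LinearMap.ker f ⊓ gV 0 = ⊥ := by
  refine (Submodule.eq_bot_iff _).2 fun z ⟨hz, hz0⟩ => by_contra fun hne => ?_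
  obtain ⟨P, hsup, hP⟩ := exists_sup_span_singleton_eq hz0 hne
  have htop : P ⊔ gV 1 ⊔ F ∙ z = ⊤ := by
    rw [sup_right_comm, hsup, (isCompl_of_isInternal hf.internalV).sup_eq_top]
  have hle := hf.finrank_le_of_sup_eq_top hchar2 (hsup ▸ le_sup_left) le_rfl hz0 hz htop
  have := hf.finiteDimensional
  have hpos : 0 < Module.finrank F W := Module.finrank_pos
  obtain rfl : m = Module.finrank F P + 1 := by rw [hP, hV0]
  rw [hV1, hW, Nat.choose_succ_succ' _ 1, Nat.choose_one_right, one_add_one_eq_two,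
    Nat.succ_mul] at hle
  obtain ⟨hP0, rfl⟩ : Module.finrank F P = 0 ∧ n = 0 := by omega
  rw [hW, hP0] at hpos
  exact hpos.ne' rfl

theorem ker_inf_odd_eq_bot (hf : IsSSKE gV gW f) (hchar2 : (2 : F) ≠ 0) {m n : ℕ}
    (hV0 : Module.finrank F (gV 0) = m) (hV1 : Module.finrank F (gV 1) = n)
    (hW : Module.finrank F W = m.choose 2 + (n + 1).choose 2 + m * n) :
    LinearMap.ker f ⊓ gV 1 = ⊥ := by
  refine (Submodule.eq_bot_iff _).2 fun z ⟨hz, hz1⟩ => by_contra fun hne => ?_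
  obtain ⟨Q, hsup, hQ⟩ := exists_sup_span_singleton_eq hz1 hne
  have htop : gV 0 ⊔ Q ⊔ F ∙ z = ⊤ := by
    rw [sup_assoc, hsup, (isCompl_of_isInternal hf.internalV).sup_eq_top]
  have hle := hf.finrank_le_of_sup_eq_top hchar2 le_rfl (hsup ▸ le_sup_left) hz1 hz htop
  obtain rfl : n = Module.finrank F Q + 1 := by rw [hQ, hV1]
  rw [hV0, hW, Nat.choose_succ_succ' (Module.finrank F Q + 1) 1, Nat.choose_one_right,
    one_add_one_eq_two, Nat.mul_succ] at hle
  omega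

theorem ker_eq_bot [Nontrivial W] (hf : IsSSKE gV gW f) (hchar2 : (2 : F) ≠ 0) {m n : ℕ}
    (hV0 : Module.finrank F (gV 0) = m) (hV1 : Module.finrank F (gV 1) = n)
    (hW : Module.finrank F W = m.choose 2 + (n + 1).choose 2 + m * n) :
    LinearMap.ker f = ⊥ := by
  rw [hf.isGradedSub_ker, hf.ker_inf_even_eq_bot hchar2 hV0 hV1 hW,
    hf.ker_inf_odd_eq_bot hchar2 hV0 hV1 hW, sup_bot_eq]

end IsSSKE

section SuperBracket

variable [Field F] [AddCommGroup V] [Module F V] [AddCommGroup W] [Module F W]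

theorem derivedSub_superBracket (f : V →ₗ[F] V →ₗ[F] W) :
    derivedSub (superBracket f) = (⊥ : Submodule F V).prod (Submodule.map₂ f ⊤ ⊤) := by
  have himage : {z : V × W | ∃ x y : V × W, z = superBracket f x y} =
      LinearMap.inr F V W '' Set.image2 (fun u v => f u v) Set.univ Set.univ := by
    ext z
    constructor
    · rintro ⟨x, y, rfl⟩
      exact ⟨_, ⟨x.1, trivial, y.1, trivial, rfl⟩, rfl⟩
    · rintro ⟨_, ⟨u, -, v, -, rfl⟩, rfl⟩
      exact ⟨(u, 0), (v, 0), rfl⟩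
  rw [derivedSub, himage, Submodule.span_image, Submodule.map_inr,
    Submodule.map₂_eq_span_image2]
  rfl

theorem setOf_superBracket_eq_zero (f : V →ₗ[F] V →ₗ[F] W) :
    {z : V × W | ∀ x : V × W, superBracket f z x = 0} =
      ((LinearMap.ker f).prod ⊤ : Submodule F (V × W)) := by
  ext z
  constructor
  · intro hz
    exact ⟨LinearMap.ext fun v => congrArg Prod.snd (hz (v, 0)), trivial⟩
  · rintro ⟨hz, -⟩ x
    exact Prod.ext rfl (LinearMap.congr_fun hz x.1)

end SuperBracket

theorem stmt4_general [Field F] [AddCommGroup V] [Module F V] [AddCommGroup W] [Module F W]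
    [FiniteDimensional F V] [Nontrivial W] (hchar2 : (2 : F) ≠ 0)
    (gV : ZMod 2 → Submodule F V) (gW : ZMod 2 → Submodule F W)
    (f : V →ₗ[F] V →ₗ[F] W) (hf : IsSSKE gV gW f)
    (m n : ℕ)
    (hV0 : Module.finrank F ↥(gV 0) = m) (hV1 : Module.finrank F ↥(gV 1) = n)
    (hW0 : Module.finrank F ↥(gW 0) = m.choose 2 + (n + 1).choose 2)
    (hW1 : Module.finrank F ↥(gW 1) = m * n) :
    derivedSub (superBracket f) = (⊥ : Submodule F V).prod (⊤ : Submodule F W) ∧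
    {z : V × W | ∀ x : V × W, superBracket f z x = 0}
      = (derivedSub (superBracket f) : Set (V × W)) ∧
    Module.finrank F ↥((gV 0).prod (gW 0)) = (m + 1).choose 2 + (n + 1).choose 2 ∧
    Module.finrank F ↥((gV 1).prod (gW 1)) = m * n + n ∧
    Module.finrank F ↥(derivedSub (superBracket f) ⊓ (gV 0).prod (gW 0))
      = m.choose 2 + (n + 1).choose 2 ∧
    Module.finrank F ↥(derivedSub (superBracket f) ⊓ (gV 1).prod (gW 1)) = m * n := by
  have := hf.finiteDimensional
  have hW : Module.finrank F W = m.choose 2 + (n + 1).choose 2 + m * n := by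
    rw [← Submodule.finrank_add_eq_of_isCompl (isCompl_of_isInternal hf.internalW), hW0, hW1]
  have hderived : derivedSub (superBracket f) = (⊥ : Submodule F V).prod (⊤ : Submodule F W) := by
    rw [derivedSub_superBracket, hf.map₂_top_top]
  have hcenter : {z : V × W | ∀ x : V × W, superBracket f z x = 0}
      = ((⊥ : Submodule F V).prod (⊤ : Submodule F W) : Submodule F (V × W)) := by
    rw [setOf_superBracket_eq_zero, hf.ker_eq_bot hchar2 hV0 hV1 hW]
  have hpiece (σ : ZMod 2) :
      Module.finrank F ↥(derivedSub (superBracket f) ⊓ (gV σ).prod (gW σ))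
        = Module.finrank F (gW σ) := by
    rw [hderived, Submodule.prod_inf_prod, bot_inf_eq, top_inf_eq, finrank_submodule_prod,
      finrank_bot, zero_add]
  refine ⟨hderived, hderived ▸ hcenter, ?_, ?_, (hpiece 0).trans hW0, (hpiece 1).trans hW1⟩
  · rw [finrank_submodule_prod, hV0, hW0, Nat.choose_succ_succ' m 1, Nat.choose_one_right,
      add_assoc]
  · rw [finrank_submodule_prod, hV1, hW1, add_comm]

/-- If `f` has dimension `(m | n)` and rank
`(C(m,2) + C(n+1,2) | mn)`, then `L_f` is a generalized Heisenberg Lie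
superalgebra (`Z(L_f) = L_f² = 0 ⊕ W`) of dimension
`(C(m+1,2) + C(n+1,2) | mn + n)` whose derived subalgebra has dimension
`(C(m,2) + C(n+1,2) | mn)`. -/
theorem stmt4 [Field F] [AddCommGroup V] [Module F V] [AddCommGroup W] [Module F W]
    [FiniteDimensional F V] [FiniteDimensional F W] [Nontrivial V] [Nontrivial W]
    (hchar2 : (2 : F) ≠ 0) (hchar3 : (3 : F) ≠ 0)
    (gV : ZMod 2 → Submodule F V) (gW : ZMod 2 → Submodule F W)
    (f : V →ₗ[F] V →ₗ[F] W) (hf : IsSSKE gV gW f)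
    (m n : ℕ)
    (hV0 : Module.finrank F ↥(gV 0) = m) (hV1 : Module.finrank F ↥(gV 1) = n)
    (hW0 : Module.finrank F ↥(gW 0) = m.choose 2 + (n + 1).choose 2)
    (hW1 : Module.finrank F ↥(gW 1) = m * n) :
    derivedSub (superBracket f) = (⊥ : Submodule F V).prod (⊤ : Submodule F W) ∧
    {z : V × W | ∀ x : V × W, superBracket f z x = 0}
      = (derivedSub (superBracket f) : Set (V × W)) ∧
    Module.finrank F ↥((gV 0).prod (gW 0)) = (m + 1).choose 2 + (n + 1).choose 2 ∧
    Module.finrank F ↥((gV 1).prod (gW 1)) = m * n + n ∧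
    Module.finrank F ↥(derivedSub (superBracket f) ⊓ (gV 0).prod (gW 0))
      = m.choose 2 + (n + 1).choose 2 ∧
    Module.finrank F ↥(derivedSub (superBracket f) ⊓ (gV 1).prod (gW 1)) = m * n :=
  stmt4_general hchar2 gV gW f hf m n hV0 hV1 hW0 hW1
end
end

section
/- Let f : V × V → W be a decomposable object of SSKE with V = V̄₁ ⊕ V̄₂, f(V̄₁, V̄₂) = 0, W̄ᵢ the span of f(V̄ᵢ, V̄ᵢ), and f̄ᵢ the restriction of f to V̄ᵢ × V̄ᵢ. Then, as subspaces of V ⊗ W, X_f = X_{f̄₁} + X_{f̄₂} + V̄₁ ⊗ W̄₂ + V̄₂ ⊗ W̄₁, where X_{f̄ᵢ} ⊆ V̄ᵢ ⊗ W̄ᵢ ⊆ V ⊗ W via the canonical inclusions. -/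
open TensorProduct

noncomputable section

variable {F V W L : Type*}

/-!
Write `U`, `T` for the two orthogonal summands. Since both are graded, a homogeneous element of
`U ⊔ T` is a sum of homogeneous elements of `U` and of `T` of the same degree. As `f` vanishes on
mixed pairs, expanding a generator of `X_f` on `U ⊔ T` along these sums leaves a generator on `U`,
one on `T`, and mixed terms in `U ⊗ f(T, T)` and `T ⊗ f(U, U)`. Conversely, for `a ∈ U` and
`b, c ∈ T` two of the three terms of the generator at `(a, b, c)` vanish, so that up to sign
`a ⊗ f(b, c)` is itself a generator.
-/

section GradedSub

variable [Field F] [AddCommGroup V] [Module F V] [AddCommGroup W] [Module F W]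
  {gV : ZMod 2 → Submodule F V} {U T : Submodule F V}

namespace IsGradedSub

theorem inf_sup_inf_add_one (hU : IsGradedSub gV U) (σ : ZMod 2) :
    U ⊓ gV σ ⊔ U ⊓ gV (σ + 1) = U := by
  obtain rfl | rfl : σ = 0 ∨ σ = 1 := by decide +revert
  · exact hU.symm
  · rw [sup_comm]
    exact hU.symm

theorem le_of_forall_inf_le (hU : IsGradedSub gV U) {S : Submodule F V}
    (h : ∀ σ, U ⊓ gV σ ≤ S) : U ≤ S :=
  hU.le.trans (sup_le (h 0) (h 1))

theorem sup_inf_eq (hg : iSupIndep gV) (hU : IsGradedSub gV U) (hT : IsGradedSub gV T)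
    (σ : ZMod 2) :
    (U ⊔ T) ⊓ gV σ = U ⊓ gV σ ⊔ T ⊓ gV σ := by
  have hdisj : Disjoint (U ⊓ gV (σ + 1) ⊔ T ⊓ gV (σ + 1)) (gV σ) :=
    (hg.pairwiseDisjoint (by simp)).mono_left (sup_le inf_le_right inf_le_right)
  calc (U ⊔ T) ⊓ gV σ
      = (U ⊓ gV σ ⊔ T ⊓ gV σ ⊔ (U ⊓ gV (σ + 1) ⊔ T ⊓ gV (σ + 1))) ⊓ gV σ := by
        rw [sup_sup_sup_comm, hU.inf_sup_inf_add_one, hT.inf_sup_inf_add_one]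
    _ = U ⊓ gV σ ⊔ T ⊓ gV σ := by
        rw [sup_inf_assoc_of_le _ (sup_le inf_le_right inf_le_right), hdisj.eq_bot, sup_bot_eq]

theorem map₂_le (hU : IsGradedSub gV U) (hT : IsGradedSub gV T) {B : V →ₗ[F] V →ₗ[F] W}
    {S : Submodule F W} (h : ∀ σ τ, ∀ u ∈ U ⊓ gV σ, ∀ t ∈ T ⊓ gV τ, B u t ∈ S) :
    Submodule.map₂ B U T ≤ S :=
  Submodule.map₂_le.2 fun _ hu t ht ↦
    hU.le_of_forall_inf_le (S := S.comap (B.flip t)) (fun σ u hu ↦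
      hT.le_of_forall_inf_le (S := S.comap (B u)) (fun τ t ht ↦ h σ τ u hu t ht) ht) hu

end IsGradedSub

theorem IsSSKE.apply_eq_zero_symm {gW : ZMod 2 → Submodule F W} {f : V →ₗ[F] V →ₗ[F] W}
    (hf : IsSSKE gV gW f) (hU : IsGradedSub gV U) (hT : IsGradedSub gV T)
    (hUT : ∀ u ∈ U, ∀ t ∈ T, f u t = 0) : ∀ t ∈ T, ∀ u ∈ U, f t u = 0 := by
  suffices h : Submodule.map₂ f T U ≤ ⊥ from Submodule.map₂_le.1 h
  refine hT.map₂_le hU fun τ σ t ht u hu ↦ ?_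
  rw [Submodule.mem_bot, hf.skew τ σ t ht.2 u hu.2, hUT u hu.1 t ht.1, smul_zero]

end GradedSub

section CyclicSum

variable [Field F] [AddCommGroup V] [Module F V] [AddCommGroup W] [Module F W]
  {gV : ZMod 2 → Submodule F V} {U T : Submodule F V} {f : V →ₗ[F] V →ₗ[F] W}

theorem ssign_ne_zero (σ τ : ZMod 2) : ssign F σ τ ≠ 0 :=
  pow_ne_zero _ (neg_ne_zero.2 one_ne_zero)

theorem span_setOf_eq_map₂ {P : Type*} [AddCommGroup P] [Module F P] (B : V →ₗ[F] W →ₗ[F] P)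
    (p : Submodule F V) (q : Submodule F W) :
    Submodule.span F {z : P | ∃ v ∈ p, ∃ w ∈ q, z = B v w} = Submodule.map₂ B p q := by
  simp only [Submodule.map₂_eq_span_image2, Set.image2, SetLike.mem_coe, eq_comm]

theorem tensSpan_eq_map₂ (U : Submodule F V) (R : Submodule F W) :
    tensSpan U R = Submodule.map₂ (TensorProduct.mk F V W) U R :=
  span_setOf_eq_map₂ (TensorProduct.mk F V W) U R

/-- The signed cyclic sum generating `X_f`, for degrees `d = (σ, τ, ρ)`, with the tensor factors in
`V` and the arguments of `f` taken from two separate triples `x` and `y`: the generator of `X_f` at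
`x = (a, b, c)` is `cyclicSum f d x x`, and taking `x ≠ y` describes its mixed terms. Indices in
`Fin 3` are added modulo `3`. -/
def cyclicSum (f : V →ₗ[F] V →ₗ[F] W) (d : Fin 3 → ZMod 2) (x y : Fin 3 → V) : V ⊗[F] W :=
  ∑ i, ssign F (d i) (d (i + 2)) • (x i ⊗ₜ[F] f (y (i + 1)) (y (i + 2)))

theorem XFr_eq_span_cyclicSum (gV : ZMod 2 → Submodule F V) (U : Submodule F V)
    (f : V →ₗ[F] V →ₗ[F] W) :
    XFr gV U f = Submodule.span F
      {z | ∃ d : Fin 3 → ZMod 2, ∃ x : Fin 3 → V, (∀ i, x i ∈ U ⊓ gV (d i)) ∧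
        z = cyclicSum f d x x} := by
  refine congrArg (Submodule.span F) (Set.ext fun z ↦ ⟨?_, ?_⟩)
  · rintro ⟨σ, τ, ρ, a, ha, b, hb, c, hc, rfl⟩
    refine ⟨![σ, τ, ρ], ![a, b, c], Fin.forall_fin_succ.2 ⟨ha, Fin.forall_fin_two.2 ⟨hb, hc⟩⟩, ?_⟩
    simp [cyclicSum, Fin.sum_univ_three]
  · rintro ⟨d, x, hx, rfl⟩
    exact ⟨d 0, d 1, d 2, x 0, hx 0, x 1, hx 1, x 2, hx 2, Fin.sum_univ_three _⟩

theorem cyclicSum_mem_XFr {d : Fin 3 → ZMod 2} {x : Fin 3 → V} (hx : ∀ i, x i ∈ U ⊓ gV (d i)) :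
    cyclicSum f d x x ∈ XFr gV U f := by
  rw [XFr_eq_span_cyclicSum]
  exact Submodule.subset_span ⟨d, x, hx, rfl⟩

theorem cyclicSum_mem_tensSpan {d : Fin 3 → ZMod 2} {x y : Fin 3 → V} (hx : ∀ i, x i ∈ U)
    (hy : ∀ i, y i ∈ T) : cyclicSum f d x y ∈ tensSpan U (Submodule.map₂ f T T) := by
  rw [tensSpan_eq_map₂]
  exact Submodule.sum_mem _ fun i _ ↦ Submodule.smul_mem _ _ <|
    Submodule.apply_mem_map₂ (TensorProduct.mk F V W) (hx i)
      (Submodule.apply_mem_map₂ f (hy (i + 1)) (hy (i + 2)))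

theorem cyclicSum_add_left (d : Fin 3 → ZMod 2) (x x' y : Fin 3 → V) :
    cyclicSum f d (x + x') y = cyclicSum f d x y + cyclicSum f d x' y := by
  simp only [cyclicSum, Pi.add_apply, add_tmul, smul_add, Finset.sum_add_distrib]

theorem cyclicSum_add_right (d : Fin 3 → ZMod 2) (x : Fin 3 → V) {y y' : Fin 3 → V}
    (h : ∀ i j, f (y i) (y' j) = 0) (h' : ∀ i j, f (y' i) (y j) = 0) :
    cyclicSum f d x (y + y') = cyclicSum f d x y + cyclicSum f d x y' := by
  simp only [cyclicSum, Pi.add_apply, map_add, LinearMap.add_apply, h, h', add_zero, zero_add,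
    tmul_add, smul_add, Finset.sum_add_distrib]

theorem XFr_mono (gV : ZMod 2 → Submodule F V) (f : V →ₗ[F] V →ₗ[F] W) (h : U ≤ T) :
    XFr gV U f ≤ XFr gV T f := by
  simp only [XFr_eq_span_cyclicSum]
  refine Submodule.span_mono ?_
  rintro z ⟨d, x, hx, rfl⟩
  exact ⟨d, x, fun i ↦ inf_le_inf_right _ h (hx i), rfl⟩

theorem tmul_mem_XFr {σ τ ρ : ZMod 2} {a b c : V} (ha : a ∈ U ⊓ gV σ) (hb : b ∈ U ⊓ gV τ)
    (hc : c ∈ U ⊓ gV ρ) (hca : f c a = 0) (hab : f a b = 0) :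
    a ⊗ₜ[F] f b c ∈ XFr gV U f := by
  rw [← Submodule.smul_mem_iff _ (ssign_ne_zero (F := F) σ ρ)]
  refine Submodule.subset_span ⟨σ, τ, ρ, a, ha, b, hb, c, hc, ?_⟩
  simp only [hca, hab, tmul_zero, smul_zero, add_zero]

theorem tensSpan_map₂_le_XFr_sup (hU : IsGradedSub gV U) (hT : IsGradedSub gV T)
    (hUT : ∀ u ∈ U, ∀ t ∈ T, f u t = 0) (hTU : ∀ t ∈ T, ∀ u ∈ U, f t u = 0) :
    tensSpan U (Submodule.map₂ f T T) ≤ XFr gV (U ⊔ T) f := by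
  rw [tensSpan_eq_map₂, Submodule.map₂_le]
  intro a ha
  refine hT.map₂_le hT (S := (XFr gV (U ⊔ T) f).comap (TensorProduct.mk F V W a))
    fun τ ρ b hb c hc ↦ ?_
  refine hU.le_of_forall_inf_le
    (S := (XFr gV (U ⊔ T) f).comap ((TensorProduct.mk F V W).flip (f b c))) (fun σ a ha ↦ ?_) ha
  exact tmul_mem_XFr ⟨Submodule.mem_sup_left ha.1, ha.2⟩ ⟨Submodule.mem_sup_right hb.1, hb.2⟩
    ⟨Submodule.mem_sup_right hc.1, hc.2⟩ (hTU c hc.1 a ha.1) (hUT a ha.1 b hb.1)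

theorem XFr_sup_le (hg : iSupIndep gV) (hU : IsGradedSub gV U) (hT : IsGradedSub gV T)
    (hUT : ∀ u ∈ U, ∀ t ∈ T, f u t = 0) (hTU : ∀ t ∈ T, ∀ u ∈ U, f t u = 0) :
    XFr gV (U ⊔ T) f ≤ XFr gV U f ⊔ XFr gV T f ⊔ tensSpan U (Submodule.map₂ f T T) ⊔
      tensSpan T (Submodule.map₂ f U U) := by
  rw [XFr_eq_span_cyclicSum gV (U ⊔ T), Submodule.span_le]
  rintro z ⟨d, x, hx, rfl⟩
  have hsplit (i : Fin 3) : ∃ u ∈ U ⊓ gV (d i), ∃ t ∈ T ⊓ gV (d i), u + t = x i :=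
    Submodule.mem_sup.1 (hU.sup_inf_eq hg hT (d i) ▸ hx i)
  choose u hu t ht hut using hsplit
  obtain rfl : u + t = x := funext hut
  have hexpand : cyclicSum f d (u + t) (u + t) =
      cyclicSum f d u u + cyclicSum f d t t + cyclicSum f d u t + cyclicSum f d t u := by
    rw [cyclicSum_add_right d _ (fun i j ↦ hUT _ (hu i).1 _ (ht j).1)
      (fun i j ↦ hTU _ (ht i).1 _ (hu j).1), cyclicSum_add_left, cyclicSum_add_left]
    abel
  rw [SetLike.mem_coe, hexpand]
  exact Submodule.add_mem_sup
    (Submodule.add_mem_sup (Submodule.add_mem_sup (cyclicSum_mem_XFr hu) (cyclicSum_mem_XFr ht))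
      (cyclicSum_mem_tensSpan (fun i ↦ (hu i).1) fun i ↦ (ht i).1))
    (cyclicSum_mem_tensSpan (fun i ↦ (ht i).1) fun i ↦ (hu i).1)

theorem stmt8_general (hg : iSupIndep gV) (hU : IsGradedSub gV U) (hT : IsGradedSub gV T)
    (hUT : ∀ u ∈ U, ∀ t ∈ T, f u t = 0) (hTU : ∀ t ∈ T, ∀ u ∈ U, f t u = 0) :
    XFr gV (U ⊔ T) f = XFr gV U f ⊔ XFr gV T f ⊔ tensSpan U (Submodule.map₂ f T T) ⊔
      tensSpan T (Submodule.map₂ f U U) := by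
  refine (XFr_sup_le hg hU hT hUT hTU).antisymm (sup_le (sup_le (sup_le ?_ ?_) ?_) ?_)
  · exact XFr_mono gV f le_sup_left
  · exact XFr_mono gV f le_sup_right
  · exact tensSpan_map₂_le_XFr_sup hU hT hUT hTU
  · rw [sup_comm U T]
    exact tensSpan_map₂_le_XFr_sup hT hU hTU hUT

end CyclicSum

/-- For a decomposable object `f` of SSKE, inside `V ⊗ W` one has
`X_f = X_{f̄₁} + X_{f̄₂} + V̄₁ ⊗ W̄₂ + V̄₂ ⊗ W̄₁`. -/
theorem stmt8 [Field F] [AddCommGroup V] [Module F V] [AddCommGroup W] [Module F W]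
    [FiniteDimensional F V] [FiniteDimensional F W] [Nontrivial V] [Nontrivial W]
    (hchar2 : (2 : F) ≠ 0) (hchar3 : (3 : F) ≠ 0)
    (gV : ZMod 2 → Submodule F V) (gW : ZMod 2 → Submodule F W)
    (f : V →ₗ[F] V →ₗ[F] W) (hf : IsSSKE gV gW f)
    (V1 V2 : Submodule F V) (hV1ne : V1 ≠ ⊥) (hV2ne : V2 ≠ ⊥)
    (hV1g : IsGradedSub gV V1) (hV2g : IsGradedSub gV V2)
    (hcompl : IsCompl V1 V2)
    (hzero : ∀ u ∈ V1, ∀ v ∈ V2, f u v = 0) :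
    ∀ W1 W2 : Submodule F W,
      W1 = Submodule.span F {w : W | ∃ u ∈ V1, ∃ v ∈ V1, w = f u v} →
      W2 = Submodule.span F {w : W | ∃ u ∈ V2, ∃ v ∈ V2, w = f u v} →
      XFr gV (⊤ : Submodule F V) f
        = XFr gV V1 f ⊔ XFr gV V2 f ⊔ tensSpan V1 W2 ⊔ tensSpan V2 W1 := by
  rintro W1 W2 rfl rfl
  simpa only [hcompl.sup_eq_top, span_setOf_eq_map₂] using
    stmt8_general hf.internalV.submodule_iSupIndep hV1g hV2g hzero
      (hf.apply_eq_zero_symm hV1g hV2g hzero)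
end
end
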